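/- For every integer k ≥ 21 and every real h with 0 ≤ h ≤ 1.05, f(N_k, h) > 0.98. -/

import Mathlib

open MeasureTheory Real

/-- The prime zeta function `P(s) = ∑_p p^{-s}` (sum over all primes). -/
noncomputable def primeZeta (s : ℝ) : ℝ := ∑' p : Nat.Primes, (p.1 : ℝ) ^ (-s)

/-- The set of `k`-almost primes: positive integers with exactly `k` prime
factors counted with multiplicity. -/
def almostPrimes (k : ℕ) : Set ℕ := {n | 0 < n ∧ n.primeFactorsList.length = k}

/-- `P_k(s) = ∑_{n ∈ N_k} n^{-s}`; note `P_0(s) = 1` since `N_0 = {1}`. -/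
noncomputable def Pk (k : ℕ) (s : ℝ) : ℝ := ∑' n : almostPrimes k, (n.1 : ℝ) ^ (-s)

/-- Translated sum `f(A, h) = ∑_{a ∈ A} 1/(a (log a + h))`. -/
noncomputable def transSum (A : Set ℕ) (h : ℝ) : ℝ :=
  ∑' a : A, 1 / ((a.1 : ℝ) * (Real.log a.1 + h))

/-!
Let `P_k(s) = ∑_{n ∈ N_k} n^{-s}`. The Laplace transform gives
`f(N_k, h) = ∫_0^∞ P_k(1 + u) e^{-hu} du`. Factor `n ∈ N_k` as `n = m r`, where `m` is `N`-smooth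
and `r` is `N`-rough with `i = k - Ω(m)` prime factors. The Euler product and `ζ(1 + u) ≥ 1 / u`
give `∑_{p ≥ N} p^{-(1+u)} ≥ log (c / u)` for `0 < u < c`, where `c` is slightly smaller than
`∏_{p < N} (1 - 1/p)`, so the Dirichlet series of the rough parts is at least `log (c / u)^i / i!`.
Substituting `u = c e^{-t}` in `∫_0^c log (c / u)^i / i! (1 - Hu) du` with `H = log m + h`, each `m`
contributes at least `(c / m) (1 - H c / 2^{i+1})`. The main terms add up to almost
`c ∏_{p < N} (1 - 1/p)^{-1}`, which is close to `1`. The loss, and the missing terms with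
`Ω(m) > k`, are controlled by Rankin's trick: with `1 ≤ z < 2` they are `O(k z^{-k})` times
`∑_m z^{Ω(m)} / m = ∏_{p < N} (1 - z/p)^{-1}`. The choice `N = 37`, `z = 1.8` suffices for `k ≥ 21`.
-/

open scoped ENNReal ArithmeticFunction.Omega Pointwise
open Finset

section Zeta

variable {s : ℝ}

lemma antitoneOn_rpow_neg (hs : 0 ≤ s) : AntitoneOn (fun x : ℝ => x ^ (-s)) (Set.Ioi 0) :=
  fun _ hx _ _ hxy => rpow_le_rpow_of_nonpos hx hxy (neg_nonpos.2 hs)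

lemma summable_natCast_rpow_neg (hs : 1 < s) : Summable fun n : ℕ => (n : ℝ) ^ (-s) :=
  Real.summable_nat_rpow.2 (neg_lt_neg hs)

lemma integral_Ioi_one_rpow_neg (hs : 1 < s) :
    ∫ x in Set.Ioi (1 : ℝ), x ^ (-s) = 1 / (s - 1) := by
  rw [integral_Ioi_rpow_of_lt (neg_lt_neg hs) one_pos, one_rpow, ← neg_div_neg_eq]
  ring_nf

lemma tsum_natCast_rpow_neg (hs : 1 < s) :
    ∑' n : ℕ, (n : ℝ) ^ (-s) = ∑' n : ℕ, ((n + 1 : ℕ) : ℝ) ^ (-s) := by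
  rw [(summable_natCast_rpow_neg hs).tsum_eq_zero_add, Nat.cast_zero, zero_rpow (by linarith),
    zero_add]

lemma one_div_sub_one_le_tsum_rpow_neg (hs : 1 < s) :
    1 / (s - 1) ≤ ∑' n : ℕ, (n : ℝ) ^ (-s) := by
  rw [tsum_natCast_rpow_neg hs, ← integral_Ioi_one_rpow_neg hs]
  simpa using AntitoneOn.integral_le_tsum_comp_add 1
    ((antitoneOn_rpow_neg (by linarith : 0 ≤ s)).mono (Set.Ici_subset_Ioi.2 (by simp)))
    (summable_natCast_rpow_neg hs) fun t ht =>
      rpow_nonneg (zero_le_one.trans (by simpa using (Set.mem_Ioi.1 ht).le)) _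

lemma tsum_rpow_neg_le_one_add (hs : 1 < s) :
    ∑' n : ℕ, (n : ℝ) ^ (-s) ≤ 1 + 1 / (s - 1) := by
  have h_tail := AntitoneOn.tsum_comp_add_le_integral 1
    ((antitoneOn_rpow_neg (by linarith : 0 ≤ s)).mono (Set.Ici_subset_Ioi.2 (by simp)))
    (by simpa using integrableOn_Ioi_rpow_of_lt (neg_lt_neg hs) one_pos)
    fun t ht => rpow_nonneg (zero_le_one.trans (by simpa using (Set.mem_Ioi.1 ht).le)) _
  rw [tsum_natCast_rpow_neg hs,
    ((summable_nat_add_iff 1).2 (summable_natCast_rpow_neg hs)).tsum_eq_zero_add,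
    ← integral_Ioi_one_rpow_neg hs]
  simpa using h_tail

lemma natCast_rpow_neg_le_one_div (hs : 1 < s) {n : ℕ} (hn : n ≠ 0) :
    (n : ℝ) ^ (-s) ≤ 1 / n := by
  rw [one_div, ← rpow_neg_one]
  exact rpow_le_rpow_of_exponent_le (by exact_mod_cast Nat.one_le_iff_ne_zero.2 hn) (by linarith)

lemma natCast_rpow_neg_lt_one (hs : 0 < s) {n : ℕ} (hn : 1 < n) : (n : ℝ) ^ (-s) < 1 :=
  rpow_lt_one_of_one_lt_of_neg (by exact_mod_cast hn) (neg_lt_zero.2 hs)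

lemma summable_neg_log_one_sub_primes_rpow_neg (hs : 1 < s) :
    Summable fun p : Nat.Primes => -log (1 - (p : ℝ) ^ (-s)) := by
  simpa only [sub_eq_add_neg] using
    (summable_log_one_add_of_summable (Nat.Primes.summable_rpow.2 (neg_lt_neg hs)).neg).neg

lemma log_tsum_rpow_neg (hs : 1 < s) :
    log (∑' n : ℕ, (n : ℝ) ^ (-s)) = ∑' p : Nat.Primes, -log (1 - (p : ℝ) ^ (-s)) := by
  let f : ℕ →*₀ ℝ :=
    { toFun := fun n => (n : ℝ) ^ (-s)
      map_zero' := by rw [Nat.cast_zero, zero_rpow (by linarith)]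
      map_one' := by simp
      map_mul' := fun a b => by rw [Nat.cast_mul, mul_rpow a.cast_nonneg b.cast_nonneg] }
  have h_euler : HasProd (fun p : Nat.Primes => (1 - (p : ℝ) ^ (-s))⁻¹)
      (∑' n : ℕ, (n : ℝ) ^ (-s)) :=
    EulerProduct.eulerProduct_completely_multiplicative_hasProd (f := f)
      (summable_natCast_rpow_neg hs).norm
  have h_exp := (summable_neg_log_one_sub_primes_rpow_neg hs).hasSum.rexp
  have h_factor : (rexp ∘ fun p : Nat.Primes => -log (1 - (p : ℝ) ^ (-s))) =
      fun p : Nat.Primes => (1 - (p : ℝ) ^ (-s))⁻¹ := by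
    ext p
    have := natCast_rpow_neg_lt_one (zero_lt_one.trans hs) p.2.one_lt
    rw [Function.comp_apply, exp_neg, exp_log (by linarith)]
  rw [h_factor] at h_exp
  rw [h_euler.unique h_exp, log_exp]

lemma primeZeta_le_log (hs : 1 < s) : primeZeta s ≤ log (1 + 1 / (s - 1)) := calc
  primeZeta s ≤ ∑' p : Nat.Primes, -log (1 - (p : ℝ) ^ (-s)) := by
    refine (Nat.Primes.summable_rpow.2 (neg_lt_neg hs)).tsum_le_tsum (fun p => ?_)
      (summable_neg_log_one_sub_primes_rpow_neg hs)
    have := natCast_rpow_neg_lt_one (zero_lt_one.trans hs) p.2.one_lt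
    linarith [log_le_sub_one_of_pos (sub_pos.2 this)]
  _ = log (∑' n : ℕ, (n : ℝ) ^ (-s)) := (log_tsum_rpow_neg hs).symm
  _ ≤ log (1 + 1 / (s - 1)) :=
    log_le_log ((one_div_pos.2 (sub_pos.2 hs)).trans_le (one_div_sub_one_le_tsum_rpow_neg hs))
      (tsum_rpow_neg_le_one_add hs)

end Zeta

section RoughPrimes

/-- The primes `p ≥ N`. Complementing `Nat.primesBelow N`, the bound `N` itself is included. -/
def primesFrom (N : ℕ) : Set ℕ := {p | p.Prime ∧ N ≤ p}

/-- The Mertens product `∏_{p < N} (1 - 1/p)`, lowered by the factor `e^{-1/(2(N-1))}` that pays for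
the higher prime powers of the primes `p ≥ N` in the Euler product of `ζ`. It is the constant `c`
in the lower bound `∑_{p ≥ N} p^{-(1+u)} ≥ log (c / u)`. -/
noncomputable def mertensConst (N : ℕ) : ℝ :=
  (∏ p ∈ N.primesBelow, (1 - 1 / (p : ℝ))) * exp (-(1 / (2 * ((N : ℝ) - 1))))

variable {N : ℕ}

lemma one_sub_one_div_pos {n : ℕ} (hn : 1 < n) : 0 < 1 - 1 / (n : ℝ) := by
  have : (1 : ℝ) < n := by exact_mod_cast hn
  rw [sub_pos, div_lt_one (by linarith)]
  exact this

lemma mertensConst_pos (N : ℕ) : 0 < mertensConst N :=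
  mul_pos (prod_pos fun _ hp => one_sub_one_div_pos (Nat.mem_primesBelow.1 hp).2.one_lt) (exp_pos _)

lemma mertensConst_le_one (hN : 1 ≤ N) : mertensConst N ≤ 1 := by
  have hN' : (1 : ℝ) ≤ N := by exact_mod_cast hN
  refine mul_le_one₀ (prod_le_one (fun p hp => ?_) fun p _ => ?_) (exp_pos _).le ?_
  · exact (one_sub_one_div_pos (Nat.mem_primesBelow.1 hp).2.one_lt).le
  · exact sub_le_self _ (by positivity)
  · rw [exp_le_one_iff, neg_nonpos]
    exact one_div_nonneg.2 (by linarith)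

lemma log_mertensConst (N : ℕ) :
    log (mertensConst N) =
      ∑ p ∈ N.primesBelow, log (1 - 1 / (p : ℝ)) - 1 / (2 * ((N : ℝ) - 1)) := by
  have h_pos : ∀ p ∈ N.primesBelow, (1 - 1 / (p : ℝ)) ≠ 0 := fun p hp =>
    (one_sub_one_div_pos (Nat.mem_primesBelow.1 hp).2.one_lt).ne'
  rw [mertensConst, log_mul (prod_ne_zero_iff.2 h_pos) (exp_pos _).ne', log_exp, log_prod h_pos,
    ← sub_eq_add_neg]

lemma neg_log_one_sub_le {x : ℝ} (h0 : 0 ≤ x) (h1 : x < 1) :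
    -log (1 - x) ≤ x + x ^ 2 / (2 * (1 - x)) := by
  have h_pos : 0 < 1 - x := by linarith
  have h_sinh := self_le_sinh_iff.2 (log_nonneg ((one_le_inv₀ h_pos).2 (by linarith)))
  rw [sinh_log (by positivity), log_inv] at h_sinh
  refine h_sinh.trans_eq ?_
  field_simp
  ring

lemma neg_log_one_sub_rpow_neg_le {s : ℝ} (hs : 1 < s) {n : ℕ} (hn : 1 < n) :
    -log (1 - (n : ℝ) ^ (-s)) ≤ (n : ℝ) ^ (-s) + 1 / (2 * (n : ℝ) * (n - 1)) := by
  have h_le := natCast_rpow_neg_le_one_div hs (by lia : n ≠ 0)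
  have h_pos := one_sub_one_div_pos hn
  refine (neg_log_one_sub_le (by positivity) (by linarith)).trans (add_le_add_right ?_ _)
  have hn' : (n : ℝ) - 1 ≠ 0 := sub_ne_zero.2 (by exact_mod_cast hn.ne')
  calc ((n : ℝ) ^ (-s)) ^ 2 / (2 * (1 - (n : ℝ) ^ (-s)))
      ≤ (1 / (n : ℝ)) ^ 2 / (2 * (1 - 1 / (n : ℝ))) := by gcongr
    _ = 1 / (2 * (n : ℝ) * (n - 1)) := by field_simp

lemma hasSum_one_div_mul_sub_one (hN : 1 < N) :
    HasSum (fun n : ℕ => 1 / (2 * ((n + N : ℕ) : ℝ) * ((n + N : ℕ) - 1)))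
      (1 / (2 * ((N : ℝ) - 1))) := by
  have hN' : (1 : ℝ) < N := by exact_mod_cast hN
  let g : ℕ → ℝ := fun n => 1 / (2 * ((n : ℝ) + (N - 1)))
  have h_telescope : ∀ n : ℕ,
      1 / (2 * ((n + N : ℕ) : ℝ) * ((n + N : ℕ) - 1)) = g n - g (n + 1) := fun n => by
    have h1 : (n : ℝ) + N - 1 ≠ 0 := by linarith [n.cast_nonneg (α := ℝ)]
    have h2 : (n : ℝ) + (N - 1) ≠ 0 := by rwa [← add_sub_assoc]
    have h3 : (n : ℝ) + 1 + (N - 1) ≠ 0 := by linarith [n.cast_nonneg (α := ℝ)]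
    simp only [g]
    push_cast
    field_simp
    ring
  have h_lim : Filter.Tendsto g Filter.atTop (nhds 0) := by
    refine Filter.Tendsto.const_div_atTop (Filter.Tendsto.const_mul_atTop two_pos ?_) 1
    exact Filter.tendsto_atTop_add_const_right _ _ tendsto_natCast_atTop_atTop
  have h_nonneg : ∀ n : ℕ, 0 ≤ 1 / (2 * ((n + N : ℕ) : ℝ) * ((n + N : ℕ) - 1)) := fun n => by
    have : (0 : ℝ) ≤ (n + N : ℕ) - 1 := by push_cast; linarith [n.cast_nonneg (α := ℝ)]
    positivity
  rw [hasSum_iff_tendsto_nat_of_nonneg h_nonneg]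
  simp only [h_telescope, sum_range_sub']
  simpa [g] using h_lim.const_sub (g 0)

lemma summable_primesFrom (N : ℕ) {f : ℕ → ℝ} (hf : Summable fun p : Nat.Primes => f p) :
    Summable fun p : primesFrom N => f p :=
  hf.comp_injective (Set.inclusion_injective fun _ hp => hp.1 : Function.Injective
    (Set.inclusion _ : primesFrom N → {p | p.Prime}))

lemma primesFrom_sub_add_cancel (p : primesFrom N) : (p : ℕ) - N + N = p :=
  Nat.sub_add_cancel p.2.2

lemma primesFrom_sub_injective (N : ℕ) : Function.Injective fun p : primesFrom N => (p : ℕ) - N :=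
  fun p q (h : (p : ℕ) - N = q - N) => by
    rw [Subtype.ext_iff, ← primesFrom_sub_add_cancel p, h, primesFrom_sub_add_cancel]

lemma summable_primesFrom_one_div_mul_sub_one (hN : 1 < N) :
    Summable fun p : primesFrom N => 1 / (2 * (p : ℝ) * (p - 1)) := by
  have h := (hasSum_one_div_mul_sub_one hN).summable.comp_injective (primesFrom_sub_injective N)
  simpa only [Function.comp_def, primesFrom_sub_add_cancel] using h

lemma tsum_primesFrom_one_div_mul_sub_one_le (hN : 1 < N) :
    ∑' p : primesFrom N, 1 / (2 * (p : ℝ) * (p - 1)) ≤ 1 / (2 * ((N : ℝ) - 1)) := by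
  have h_sum := hasSum_one_div_mul_sub_one hN
  rw [← h_sum.tsum_eq]
  refine (summable_primesFrom_one_div_mul_sub_one hN).tsum_le_tsum_of_inj _
    (primesFrom_sub_injective N) (fun n _ => ?_) (fun p => ?_) h_sum.summable
  · have hN' : (1 : ℝ) < N := by exact_mod_cast hN
    have : (0 : ℝ) ≤ (n + N : ℕ) - 1 := by push_cast; linarith [n.cast_nonneg (α := ℝ)]
    positivity
  · rw [primesFrom_sub_add_cancel]

lemma tsum_primes_eq_sum_primesBelow_add (N : ℕ) {f : ℕ → ℝ}
    (hf : Summable fun p : Nat.Primes => f p) :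
    ∑' p : Nat.Primes, f p = ∑ p ∈ N.primesBelow, f p + ∑' p : primesFrom N, f p := by
  have h_union : {p | p.Prime} = (N.primesBelow : Set ℕ) ∪ primesFrom N := by
    ext p
    simp only [Set.mem_ofPred_eq, Set.mem_union, mem_coe, Nat.mem_primesBelow, primesFrom]
    lia
  have h_disj : Disjoint (N.primesBelow : Set ℕ) (primesFrom N) :=
    Set.disjoint_left.2 fun p hp hp' => (Nat.mem_primesBelow.1 hp).1.not_ge hp'.2
  calc ∑' p : Nat.Primes, f p = ∑' p : ((N.primesBelow : Set ℕ) ∪ primesFrom N : Set ℕ), f p := by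
        rw [← h_union]; rfl
    _ = _ := by
      rw [Summable.tsum_union_disjoint h_disj (N.primesBelow.summable f)
        (summable_primesFrom N hf),
        Finset.tsum_subtype']

lemma log_mertensConst_div_le (hN : 1 < N) {s : ℝ} (hs : 1 < s) :
    log (mertensConst N / (s - 1)) ≤ ∑' p : primesFrom N, (p : ℝ) ^ (-s) := by
  have h_zeta : log (1 / (s - 1)) ≤ ∑ p ∈ N.primesBelow, -log (1 - (p : ℝ) ^ (-s)) +
      ∑' p : primesFrom N, -log (1 - (p : ℝ) ^ (-s)) := by
    rw [← tsum_primes_eq_sum_primesBelow_add N (f := fun p => -log (1 - (p : ℝ) ^ (-s)))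
      (summable_neg_log_one_sub_primes_rpow_neg hs), ← log_tsum_rpow_neg hs]
    exact log_le_log (one_div_pos.2 (sub_pos.2 hs)) (one_div_sub_one_le_tsum_rpow_neg hs)
  have h_small : ∑ p ∈ N.primesBelow, -log (1 - (p : ℝ) ^ (-s)) ≤
      -∑ p ∈ N.primesBelow, log (1 - 1 / (p : ℝ)) := by
    rw [← sum_neg_distrib]
    refine sum_le_sum fun p hp => neg_le_neg ?_
    have hp1 := (Nat.mem_primesBelow.1 hp).2.one_lt
    exact log_le_log (one_sub_one_div_pos hp1)
      (sub_le_sub_left (natCast_rpow_neg_le_one_div hs (by lia)) _)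
  have h_large : ∑' p : primesFrom N, -log (1 - (p : ℝ) ^ (-s)) ≤
      ∑' p : primesFrom N, (p : ℝ) ^ (-s) + ∑' p : primesFrom N, 1 / (2 * (p : ℝ) * (p - 1)) := by
    have h1 := summable_primesFrom N (f := fun p => (p : ℝ) ^ (-s))
      (Nat.Primes.summable_rpow.2 (neg_lt_neg hs))
    have h2 := summable_primesFrom_one_div_mul_sub_one hN
    rw [← h1.tsum_add h2]
    exact (summable_primesFrom N (f := fun p => -log (1 - (p : ℝ) ^ (-s)))
      (summable_neg_log_one_sub_primes_rpow_neg hs)).tsum_le_tsum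
      (fun p => neg_log_one_sub_rpow_neg_le hs p.2.1.one_lt) (h1.add h2)
  have h_tail := tsum_primesFrom_one_div_mul_sub_one_le hN
  rw [div_eq_mul_one_div, log_mul (mertensConst_pos N).ne' (one_div_pos.2 (sub_pos.2 hs)).ne',
    log_mertensConst]
  linarith

end RoughPrimes

section DirichletSum

/-- The Dirichlet series `∑_{n ∈ A} n^{-s}` of a set of integers, with values in `ℝ≥0∞` so that sums
and integrals of such series can be interchanged without convergence conditions. -/
noncomputable def dirichletSum (A : Set ℕ) (s : ℝ) : ℝ≥0∞ :=
  ∑' n : A, ENNReal.ofReal ((n : ℝ) ^ (-s))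

variable {A B C : Set ℕ} {s : ℝ}

lemma measurable_dirichletSum (A : Set ℕ) : Measurable (dirichletSum A) := by
  unfold dirichletSum
  exact Measurable.tsum fun n => by fun_prop

lemma dirichletSum_singleton_one (s : ℝ) : dirichletSum {1} s = 1 := by
  simp [dirichletSum]

lemma ofReal_tsum_rpow_neg (h : Summable fun n : A => (n : ℝ) ^ (-s)) :
    ENNReal.ofReal (∑' n : A, (n : ℝ) ^ (-s)) = dirichletSum A s :=
  ENNReal.ofReal_tsum_of_nonneg (fun n => rpow_nonneg n.1.cast_nonneg _) h

lemma ofReal_natCast_mul_rpow (a b : ℕ) (t : ℝ) :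
    ENNReal.ofReal (((a * b : ℕ) : ℝ) ^ t) =
      ENNReal.ofReal ((a : ℝ) ^ t) * ENNReal.ofReal ((b : ℝ) ^ t) := by
  rw [Nat.cast_mul, mul_rpow a.cast_nonneg b.cast_nonneg,
    ENNReal.ofReal_mul (rpow_nonneg a.cast_nonneg _)]

lemma dirichletSum_mul (A B : Set ℕ) (s : ℝ) :
    dirichletSum A s * dirichletSum B s =
      ∑' x : A × B, ENNReal.ofReal (((x.1 * x.2 : ℕ) : ℝ) ^ (-s)) := by
  simp only [ofReal_natCast_mul_rpow]
  rw [ENNReal.tsum_prod', dirichletSum, ← ENNReal.tsum_mul_right]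
  simp only [ENNReal.tsum_mul_left, dirichletSum]

lemma dirichletSum_mul_le_mul (A B : Set ℕ) (s : ℝ) :
    dirichletSum (A * B) s ≤ dirichletSum A s * dirichletSum B s := by
  have h_surj : Function.Surjective
      fun x : A × B => (⟨x.1 * x.2, Set.mul_mem_mul x.1.2 x.2.2⟩ : ↥(A * B)) := by
    rintro ⟨_, a, ha, b, hb, rfl⟩
    exact ⟨⟨⟨a, ha⟩, ⟨b, hb⟩⟩, rfl⟩
  rw [dirichletSum_mul]
  exact ENNReal.tsum_le_tsum_comp_of_surjective h_surj fun n : ↥(A * B) =>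
    ENNReal.ofReal ((n : ℝ) ^ (-s))

lemma dirichletSum_mul_dirichletSum_le {j : ℕ} (h_zero : 0 ∉ A) (h_mul : A * B ⊆ C)
    (h_card : ∀ n ∈ C, {a ∈ A | a ∣ n}.encard ≤ j) (s : ℝ) :
    dirichletSum A s * dirichletSum B s ≤ j * dirichletSum C s := by
  let φ : A × B → Σ n : C, {a ∈ A | a ∣ n} := fun x =>
    ⟨⟨x.1 * x.2, h_mul (Set.mul_mem_mul x.1.2 x.2.2)⟩, ⟨x.1, x.1.2, dvd_mul_right _ _⟩⟩
  let e : (Σ n : C, {a ∈ A | a ∣ n}) → ℕ × ℕ := fun y => (y.1, y.2)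
  have h_inj : Function.Injective φ := by
    rintro ⟨⟨a, ha⟩, ⟨b, hb⟩⟩ ⟨⟨a', ha'⟩, ⟨b', hb'⟩⟩ h
    obtain ⟨h_prod, rfl⟩ := Prod.mk.inj (congrArg e h)
    have ha0 : 0 < a := Nat.pos_of_ne_zero fun h0 => h_zero (h0 ▸ ha)
    obtain rfl := Nat.eq_of_mul_eq_mul_left ha0 h_prod
    rfl
  calc dirichletSum A s * dirichletSum B s
      = ∑' x : A × B, ENNReal.ofReal (((φ x).1 : ℝ) ^ (-s)) := dirichletSum_mul A B s
    _ ≤ ∑' y : Σ n : C, {a ∈ A | a ∣ n}, ENNReal.ofReal ((y.1 : ℝ) ^ (-s)) :=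
      ENNReal.tsum_comp_le_tsum_of_injective h_inj _
    _ = ∑' n : C, {a ∈ A | a ∣ n}.encard * ENNReal.ofReal ((n : ℝ) ^ (-s)) := by
      rw [ENNReal.tsum_sigma']
      exact tsum_congr fun n => ENNReal.tsum_set_const _ (ENNReal.ofReal ((n : ℝ) ^ (-s)))
    _ ≤ ∑' n : C, j * ENNReal.ofReal ((n : ℝ) ^ (-s)) := by
      refine ENNReal.tsum_le_tsum fun n => mul_le_mul_left ?_ _
      exact_mod_cast h_card n n.2
    _ = j * dirichletSum C s := ENNReal.tsum_mul_left

end DirichletSum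

section AlmostPrimes

lemma mem_almostPrimes_iff {k n : ℕ} : n ∈ almostPrimes k ↔ n ≠ 0 ∧ Ω n = k := by
  rw [ArithmeticFunction.cardFactors_apply, ← Nat.pos_iff_ne_zero]
  rfl

lemma one_lt_of_mem_almostPrimes {k n : ℕ} (hk : k ≠ 0) (hn : n ∈ almostPrimes k) : 1 < n :=
  ArithmeticFunction.cardFactors_pos_iff_one_lt.1 <| by
    rw [(mem_almostPrimes_iff.1 hn).2]
    exact Nat.pos_of_ne_zero hk

lemma almostPrimes_zero : almostPrimes 0 = {1} := by
  ext n
  rw [mem_almostPrimes_iff, ArithmeticFunction.cardFactors_eq_zero_iff_eq_zero_or_one,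
    Set.mem_singleton_iff]
  lia

lemma almostPrimes_one : almostPrimes 1 = {p | p.Prime} := by
  ext n
  rw [mem_almostPrimes_iff, ArithmeticFunction.cardFactors_eq_one_iff_prime]
  exact and_iff_right_of_imp Nat.Prime.ne_zero

lemma mul_mem_almostPrimes {j k m n : ℕ} (hm : m ∈ almostPrimes j) (hn : n ∈ almostPrimes k) :
    m * n ∈ almostPrimes (j + k) := by
  rw [mem_almostPrimes_iff] at *
  exact ⟨mul_ne_zero hm.1 hn.1, by rw [ArithmeticFunction.cardFactors_mul hm.1 hn.1, hm.2, hn.2]⟩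

lemma almostPrimes_succ (k : ℕ) :
    almostPrimes (k + 1) = {p | p.Prime} * almostPrimes k := by
  rw [← almostPrimes_one]
  refine Set.Subset.antisymm (fun n hn => ?_) ?_
  · obtain ⟨p, hp, m, rfl⟩ :=
      Nat.exists_prime_and_dvd (one_lt_of_mem_almostPrimes k.succ_ne_zero hn).ne'
    obtain ⟨h0, hΩ⟩ := mem_almostPrimes_iff.1 hn
    have hm : m ≠ 0 := right_ne_zero_of_mul h0
    rw [ArithmeticFunction.cardFactors_mul hp.ne_zero hm,
      ArithmeticFunction.cardFactors_eq_one_iff_prime.2 hp, add_comm,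
      Nat.add_right_cancel_iff] at hΩ
    exact Set.mul_mem_mul (almostPrimes_one ▸ hp) (mem_almostPrimes_iff.2 ⟨hm, hΩ⟩)
  · rintro _ ⟨p, hp, m, hm, rfl⟩
    exact add_comm k 1 ▸ mul_mem_almostPrimes hp hm

lemma dirichletSum_almostPrimes_le (k : ℕ) (s : ℝ) :
    dirichletSum (almostPrimes k) s ≤ dirichletSum {p | p.Prime} s ^ k := by
  induction k with
  | zero => rw [almostPrimes_zero, dirichletSum_singleton_one, pow_zero]
  | succ k ih => calc
      dirichletSum (almostPrimes (k + 1)) s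
        ≤ dirichletSum {p | p.Prime} s * dirichletSum (almostPrimes k) s := by
          rw [almostPrimes_succ]
          exact dirichletSum_mul_le_mul _ _ s
      _ ≤ dirichletSum {p | p.Prime} s ^ (k + 1) := by rw [pow_succ']; gcongr

/-- The `N`-rough `k`-almost primes: those all of whose prime factors are at least `N`. They are the
cofactors of the `N`-smooth part of an almost prime. -/
def roughAlmostPrimes (N k : ℕ) : Set ℕ :=
  {n ∈ almostPrimes k | ∀ p, p.Prime → p ∣ n → N ≤ p}

variable {N : ℕ}

lemma roughAlmostPrimes_zero (N : ℕ) : roughAlmostPrimes N 0 = {1} := by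
  rw [roughAlmostPrimes, almostPrimes_zero, Set.sep_eq_self_iff_mem_true]
  rintro _ rfl p hp hp1
  exact absurd (Nat.dvd_one.1 hp1) hp.ne_one

lemma primesFrom_mul_roughAlmostPrimes_subset (N k : ℕ) :
    primesFrom N * roughAlmostPrimes N k ⊆ roughAlmostPrimes N (k + 1) := by
  rintro _ ⟨p, hp, n, hn, rfl⟩
  refine ⟨add_comm k 1 ▸ mul_mem_almostPrimes (almostPrimes_one ▸ hp.1) hn.1, fun q hq hqd => ?_⟩
  rcases hq.dvd_mul.1 hqd with h | h
  · exact (Nat.prime_dvd_prime_iff_eq hq hp.1).1 h ▸ hp.2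
  · exact hn.2 q hq h

lemma encard_primesFrom_dvd_le {k n : ℕ} (hn : n ∈ almostPrimes k) :
    {p ∈ primesFrom N | p ∣ n}.encard ≤ k := by
  obtain ⟨h0, hΩ⟩ := mem_almostPrimes_iff.1 hn
  have h_sub : {p ∈ primesFrom N | p ∣ n} ⊆ n.primeFactors := fun p hp =>
    Nat.mem_primeFactors.2 ⟨hp.1.1, hp.2, h0⟩
  refine (Set.encard_le_encard h_sub).trans ?_
  rw [Set.encard_coe_eq_coe_finsetCard, ← hΩ, ArithmeticFunction.cardFactors_apply]
  exact_mod_cast List.toFinset_card_le _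

lemma dirichletSum_primesFrom_pow_le (N k : ℕ) (s : ℝ) :
    dirichletSum (primesFrom N) s ^ k ≤
      (k.factorial : ℝ≥0∞) * dirichletSum (roughAlmostPrimes N k) s := by
  induction k with
  | zero => simp [roughAlmostPrimes_zero, dirichletSum_singleton_one]
  | succ k ih =>
    have h_step := dirichletSum_mul_dirichletSum_le (fun h => Nat.not_prime_zero h.1)
      (primesFrom_mul_roughAlmostPrimes_subset N k)
      (fun n hn => encard_primesFrom_dvd_le hn.1) s
    calc dirichletSum (primesFrom N) s ^ (k + 1)
        ≤ dirichletSum (primesFrom N) s *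
          ((k.factorial : ℝ≥0∞) * dirichletSum (roughAlmostPrimes N k) s) := by
          rw [pow_succ']; gcongr
      _ = (k.factorial : ℝ≥0∞) *
          (dirichletSum (primesFrom N) s * dirichletSum (roughAlmostPrimes N k) s) := by ring
      _ ≤ (k.factorial : ℝ≥0∞) *
          ((k + 1 : ℕ) * dirichletSum (roughAlmostPrimes N (k + 1)) s) := by gcongr
      _ = ((k + 1).factorial : ℝ≥0∞) * dirichletSum (roughAlmostPrimes N (k + 1)) s := by
          rw [Nat.factorial_succ]; push_cast; ring

lemma coprime_of_mem_smoothNumbers_of_mem_rough {k m r : ℕ} (hm : m ∈ N.smoothNumbers)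
    (hr : r ∈ roughAlmostPrimes N k) : m.Coprime r :=
  Nat.coprime_of_dvd fun p hp hpm hpr =>
    (Nat.mem_smoothNumbers'.1 hm p hp hpm).not_ge (hr.2 p hp hpr)

lemma eq_of_smooth_mul_rough_eq {j k m n r t : ℕ} (hm : m ∈ N.smoothNumbers)
    (hn : n ∈ N.smoothNumbers) (hr : r ∈ roughAlmostPrimes N j) (ht : t ∈ roughAlmostPrimes N k)
    (h : m * r = n * t) : m = n :=
  Nat.dvd_antisymm
    ((coprime_of_mem_smoothNumbers_of_mem_rough hm ht).dvd_of_dvd_mul_right (Dvd.intro r h))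
    ((coprime_of_mem_smoothNumbers_of_mem_rough hn hr).dvd_of_dvd_mul_right (Dvd.intro t h.symm))

lemma tsum_smooth_mul_dirichletSum_rough_le (N k : ℕ) (s : ℝ) :
    ∑' m : {m ∈ N.smoothNumbers | Ω m ≤ k}, ENNReal.ofReal ((m : ℝ) ^ (-s)) *
        dirichletSum (roughAlmostPrimes N (k - Ω (m : ℕ))) s ≤
      dirichletSum (almostPrimes k) s := by
  let φ : (Σ m : {m ∈ N.smoothNumbers | Ω m ≤ k}, roughAlmostPrimes N (k - Ω (m : ℕ))) →
      almostPrimes k := fun x => ⟨x.1 * x.2, by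
    have h := mul_mem_almostPrimes
      (mem_almostPrimes_iff.2 ⟨Nat.ne_zero_of_mem_smoothNumbers x.1.2.1, rfl⟩) x.2.2.1
    rwa [Nat.add_sub_cancel' x.1.2.2] at h⟩
  have h_inj : Function.Injective φ := by
    rintro ⟨⟨m, hm⟩, ⟨r, hr⟩⟩ ⟨⟨n, hn⟩, ⟨t, ht⟩⟩ h
    have h_prod : m * r = n * t := congrArg Subtype.val h
    obtain rfl := eq_of_smooth_mul_rough_eq hm.1 hn.1 hr ht h_prod
    have hm0 := Nat.pos_of_ne_zero (Nat.ne_zero_of_mem_smoothNumbers hm.1)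
    obtain rfl := Nat.eq_of_mul_eq_mul_left hm0 h_prod
    rfl
  calc _ = ∑' x, ENNReal.ofReal ((φ x : ℝ) ^ (-s)) := by
        rw [ENNReal.tsum_sigma']
        simp only [φ, ofReal_natCast_mul_rpow, ENNReal.tsum_mul_left, dirichletSum]
    _ ≤ dirichletSum (almostPrimes k) s :=
        ENNReal.tsum_comp_le_tsum_of_injective h_inj fun n : almostPrimes k =>
          ENNReal.ofReal ((n : ℝ) ^ (-s))

end AlmostPrimes

section Laplace

lemma ofReal_rpow_neg_one_add_mul_exp {n : ℕ} (hn : n ≠ 0) (h u : ℝ) :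
    ENNReal.ofReal ((n : ℝ) ^ (-(1 + u))) * ENNReal.ofReal (exp (-(h * u))) =
      ENNReal.ofReal (1 / n) * ENNReal.ofReal (exp (-((log n + h) * u))) := by
  have hn' : (0 : ℝ) < n := by positivity
  rw [← ENNReal.ofReal_mul (by positivity), ← ENNReal.ofReal_mul (by positivity), neg_add,
    rpow_add hn', rpow_neg_one, rpow_def_of_pos hn', mul_assoc, ← exp_add, one_div]
  ring_nf

lemma lintegral_exp_neg_mul_Ioi {a : ℝ} (ha : 0 < a) :
    ∫⁻ u in Set.Ioi (0 : ℝ), ENNReal.ofReal (exp (-(a * u))) = ENNReal.ofReal (1 / a) := by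
  simp only [← neg_mul]
  rw [← ofReal_integral_eq_lintegral_ofReal (integrableOn_exp_mul_Ioi (neg_lt_zero.2 ha) 0)
    (Filter.Eventually.of_forall fun u => (exp_pos _).le),
    integral_exp_mul_Ioi (neg_lt_zero.2 ha) 0]
  simp

lemma lintegral_dirichletSum_mul_exp {A : Set ℕ} {h : ℝ} (hA : ∀ a ∈ A, 1 < a) (h0 : 0 ≤ h) :
    ∫⁻ u in Set.Ioi (0 : ℝ), dirichletSum A (1 + u) * ENNReal.ofReal (exp (-(h * u))) =
      ∑' a : A, ENNReal.ofReal (1 / ((a : ℝ) * (log a + h))) := by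
  simp only [dirichletSum, ← ENNReal.tsum_mul_right]
  rw [lintegral_tsum fun n => by fun_prop]
  refine tsum_congr fun a => ?_
  have ha : (1 : ℝ) < (a : ℕ) := by exact_mod_cast hA a a.2
  simp only [ofReal_rpow_neg_one_add_mul_exp (zero_lt_one.trans (hA a a.2)).ne']
  rw [lintegral_const_mul _ (by fun_prop),
    lintegral_exp_neg_mul_Ioi (add_pos_of_pos_of_nonneg (log_pos ha) h0),
    ← ENNReal.ofReal_mul (by positivity), one_div_mul_one_div]

lemma log_pow_le (k : ℕ) {x : ℝ} (hx : 1 ≤ x) : log x ^ k ≤ 2 ^ k * k.factorial * √x := by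
  have hx0 : 0 < x := by linarith
  have h_exp := pow_div_factorial_le_exp (log x / 2) (by have := log_nonneg hx; positivity) k
  rw [← log_sqrt hx0.le, exp_log (sqrt_pos.2 hx0), log_sqrt hx0.le,
    div_le_iff₀ (by positivity), div_pow, div_le_iff₀ (by positivity)] at h_exp
  linarith

lemma sqrt_one_add_one_div_le {u : ℝ} (hu : 0 < u) : √(1 + 1 / u) ≤ 1 + u ^ (-(1 / 2 : ℝ)) := by
  rw [rpow_neg hu.le, ← sqrt_eq_rpow, ← sqrt_inv, ← one_div]
  refine sqrt_le_iff.2 ⟨by positivity, ?_⟩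
  nlinarith [sq_sqrt (one_div_nonneg.2 hu.le), sqrt_nonneg (1 / u)]

lemma dirichletSum_almostPrimes_le_ofReal (k : ℕ) {u : ℝ} (hu : 0 < u) :
    dirichletSum (almostPrimes k) (1 + u) ≤
      ENNReal.ofReal (2 ^ k * k.factorial * (1 + u ^ (-(1 / 2 : ℝ)))) := by
  have h_one : 1 ≤ 1 + 1 / u := le_add_of_nonneg_right (by positivity)
  have h_prime : dirichletSum {p | p.Prime} (1 + u) = ENNReal.ofReal (primeZeta (1 + u)) :=
    (ofReal_tsum_rpow_neg (Nat.Primes.summable_rpow.2 (by linarith))).symm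
  have h_log : primeZeta (1 + u) ≤ log (1 + 1 / u) := by
    simpa using primeZeta_le_log (lt_add_of_pos_right 1 hu)
  calc dirichletSum (almostPrimes k) (1 + u)
      ≤ ENNReal.ofReal (log (1 + 1 / u)) ^ k := by
        refine (dirichletSum_almostPrimes_le k _).trans ?_
        rw [h_prime]
        gcongr
    _ = ENNReal.ofReal (log (1 + 1 / u) ^ k) := (ENNReal.ofReal_pow (log_nonneg h_one) k).symm
    _ ≤ _ := by
        refine ENNReal.ofReal_le_ofReal ((log_pow_le k h_one).trans ?_)
        gcongr
        exact sqrt_one_add_one_div_le hu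

lemma tsum_almostPrimes_one_ne_top {k : ℕ} (hk : k ≠ 0) :
    ∑' a : almostPrimes k, ENNReal.ofReal (1 / ((a : ℝ) * (log a + 1))) ≠ ∞ := by
  rw [← lintegral_dirichletSum_mul_exp (fun a => one_lt_of_mem_almostPrimes hk) zero_le_one]
  have h_int : IntegrableOn (fun u : ℝ => 2 ^ k * k.factorial *
      (exp (-u) * u ^ ((1 : ℝ) - 1) + exp (-u) * u ^ ((1 / 2 : ℝ) - 1))) (Set.Ioi 0) :=
    ((GammaIntegral_convergent one_pos).add (GammaIntegral_convergent one_half_pos)).const_mul _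
  refine ne_top_of_le_ne_top h_int.lintegral_lt_top.ne ?_
  refine setLIntegral_mono' measurableSet_Ioi fun u hu => ?_
  have hu0 : 0 < u := hu
  grw [dirichletSum_almostPrimes_le_ofReal k hu0]
  rw [← ENNReal.ofReal_mul (by positivity), sub_self, rpow_zero,
    show (1 / 2 : ℝ) - 1 = -(1 / 2) by norm_num]
  exact ENNReal.ofReal_le_ofReal (by rw [one_mul]; linarith)

lemma summable_transSum_almostPrimes {k : ℕ} (hk : k ≠ 0) {h : ℝ} (h0 : 0 ≤ h) :
    Summable fun a : almostPrimes k => 1 / ((a : ℝ) * (log a + h)) := by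
  have h_one := ENNReal.summable_toReal (tsum_almostPrimes_one_ne_top hk)
  have h_log : ∀ a : almostPrimes k, 1 / 2 ≤ log a := fun a => by
    have ha : (2 : ℝ) ≤ (a : ℕ) := by exact_mod_cast one_lt_of_mem_almostPrimes hk a.2
    linarith [log_le_log two_pos ha, log_two_gt_d9]
  have h_pos : ∀ a : almostPrimes k, (0 : ℝ) < (a : ℕ) := fun a => by exact_mod_cast a.2.1
  refine (h_one.mul_left 3).of_nonneg_of_le (fun a => ?_) fun a => ?_
  · have := h_log a; positivity
  · have h1 := h_log a
    have h2 := h_pos a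
    rw [ENNReal.toReal_ofReal (by positivity), mul_one_div,
      div_le_div_iff₀ (by positivity) (by positivity)]
    nlinarith

lemma ofReal_transSum_almostPrimes {k : ℕ} (hk : k ≠ 0) {h : ℝ} (h0 : 0 ≤ h) :
    ENNReal.ofReal (transSum (almostPrimes k) h) = ∫⁻ u in Set.Ioi (0 : ℝ),
      dirichletSum (almostPrimes k) (1 + u) * ENNReal.ofReal (exp (-(h * u))) := by
  rw [lintegral_dirichletSum_mul_exp (fun a => one_lt_of_mem_almostPrimes hk) h0]
  refine ENNReal.ofReal_tsum_of_nonneg (fun a => ?_) (summable_transSum_almostPrimes hk h0)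
  have := log_natCast_nonneg a
  positivity

end Laplace

section LogIntegral

variable {c : ℝ}

lemma image_mul_exp_neg_Ioi (hc : 0 < c) :
    (fun t => c * exp (-t)) '' Set.Ioi 0 = Set.Ioo 0 c := by
  ext u
  constructor
  · rintro ⟨t, ht, rfl⟩
    exact ⟨by positivity, mul_lt_of_lt_one_right hc (exp_lt_one_iff.2 (neg_lt_zero.2 ht))⟩
  · rintro ⟨hu0, huc⟩
    refine ⟨log (c / u), log_pos ((one_lt_div hu0).2 huc), ?_⟩
    simp only [exp_neg, exp_log (div_pos hc hu0)]
    field_simp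

lemma integrableOn_pow_mul_exp_neg_mul_Ioi (i : ℕ) {a : ℝ} (ha : 0 < a) :
    IntegrableOn (fun t : ℝ => t ^ i * exp (-(a * t))) (Set.Ioi 0) := by
  have h_exponent : (-1 : ℝ) < i := by linarith [i.cast_nonneg (α := ℝ)]
  simpa using integrableOn_rpow_mul_exp_neg_mul_rpow h_exponent one_pos ha

lemma integral_pow_mul_exp_neg_mul_Ioi (i : ℕ) {a : ℝ} (ha : 0 < a) :
    ∫ t in Set.Ioi (0 : ℝ), t ^ i * exp (-(a * t)) = i.factorial / a ^ (i + 1) := by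
  have h := integral_rpow_mul_exp_neg_mul_Ioi (a := i + 1) (by positivity) ha
  rw [Gamma_nat_eq_factorial, ← Nat.cast_succ, rpow_natCast, one_div_pow] at h
  simpa [div_eq_inv_mul] using h

lemma hasDerivWithinAt_mul_exp_neg (c t : ℝ) (S : Set ℝ) :
    HasDerivWithinAt (fun t => c * exp (-t)) (c * (exp (-t) * -1)) S t :=
  ((hasDerivAt_neg t).exp.const_mul c).hasDerivWithinAt

lemma injOn_mul_exp_neg (hc : 0 < c) (S : Set ℝ) : Set.InjOn (fun t => c * exp (-t)) S :=
  fun _ _ _ _ h => neg_injective (exp_injective (mul_left_cancel₀ hc.ne' h))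

lemma abs_deriv_smul_pow_mul_log_pow (hc : 0 < c) (n i : ℕ) (t : ℝ) :
    |c * (exp (-t) * -1)| • ((c * exp (-t)) ^ n * log (c / (c * exp (-t))) ^ i) =
      c ^ (n + 1) * (t ^ i * exp (-((n + 1 : ℝ) * t))) := by
  have h_log : log (c / (c * exp (-t))) = t := by
    rw [div_mul_cancel_left₀ hc.ne', exp_neg, inv_inv, log_exp]
  have h_exp : exp (-((n + 1 : ℝ) * t)) = exp (-t) ^ (n + 1) := by
    rw [← exp_nat_mul]
    push_cast
    ring_nf
  rw [h_log, h_exp, mul_neg_one, mul_neg, abs_neg, abs_of_pos (by positivity), smul_eq_mul]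
  ring

lemma integrableOn_pow_mul_log_pow (hc : 0 < c) (n i : ℕ) :
    IntegrableOn (fun u => u ^ n * log (c / u) ^ i) (Set.Ioo 0 c) := by
  rw [← image_mul_exp_neg_Ioi hc, integrableOn_image_iff_integrableOn_abs_deriv_smul
    measurableSet_Ioi (fun t _ => hasDerivWithinAt_mul_exp_neg c t _) (injOn_mul_exp_neg hc _)]
  simp only [abs_deriv_smul_pow_mul_log_pow hc]
  exact (integrableOn_pow_mul_exp_neg_mul_Ioi i (by positivity)).const_mul _

lemma integral_pow_mul_log_pow (hc : 0 < c) (n i : ℕ) :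
    ∫ u in Set.Ioo 0 c, u ^ n * log (c / u) ^ i =
      c ^ (n + 1) * (i.factorial / (n + 1 : ℝ) ^ (i + 1)) := by
  rw [← image_mul_exp_neg_Ioi hc, integral_image_eq_integral_abs_deriv_smul
    measurableSet_Ioi (fun t _ => hasDerivWithinAt_mul_exp_neg c t _) (injOn_mul_exp_neg hc _)]
  simp only [abs_deriv_smul_pow_mul_log_pow hc]
  rw [integral_const_mul, integral_pow_mul_exp_neg_mul_Ioi i (by positivity)]

end LogIntegral

lemma ofReal_integral_le_lintegral {α : Type*} [MeasurableSpace α] {μ : Measure α} {f : α → ℝ}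
    (hf : Integrable f μ) : ENNReal.ofReal (∫ x, f x ∂μ) ≤ ∫⁻ x, ENNReal.ofReal (f x) ∂μ := by
  have h_le : ∫ x, f x ∂μ ≤ ∫ x, max (f x) 0 ∂μ :=
    integral_mono hf hf.pos_part fun x => le_max_left _ _
  calc ENNReal.ofReal (∫ x, f x ∂μ) ≤ ENNReal.ofReal (∫ x, max (f x) 0 ∂μ) :=
        ENNReal.ofReal_le_ofReal h_le
    _ = ∫⁻ x, ENNReal.ofReal (max (f x) 0) ∂μ := ofReal_integral_eq_lintegral_ofReal hf.pos_part
        (Filter.Eventually.of_forall fun x => le_max_right _ _)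
    _ = ∫⁻ x, ENNReal.ofReal (f x) ∂μ := by simp

lemma ofReal_tsum_le_tsum_ofReal {α : Type*} {f : α → ℝ} (hf : Summable f) :
    ENNReal.ofReal (∑' x, f x) ≤ ∑' x, ENNReal.ofReal (f x) := by
  have h_pos : Summable fun x => max (f x) 0 :=
    hf.abs.of_nonneg_of_le (fun x => le_max_right _ _) fun x =>
      max_le (le_abs_self _) (abs_nonneg _)
  calc ENNReal.ofReal (∑' x, f x) ≤ ENNReal.ofReal (∑' x, max (f x) 0) :=
        ENNReal.ofReal_le_ofReal (hf.tsum_le_tsum (fun x => le_max_left _ _) h_pos)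
    _ = ∑' x, ENNReal.ofReal (max (f x) 0) :=
        ENNReal.ofReal_tsum_of_nonneg (fun x => le_max_right _ _) h_pos
    _ = ∑' x, ENNReal.ofReal (f x) := by simp

section RoughIntegral

variable {N : ℕ}

lemma ofReal_log_pow_div_factorial_le (hN : 1 < N) (i : ℕ) {u : ℝ}
    (hu : u ∈ Set.Ioo 0 (mertensConst N)) :
    ENNReal.ofReal (log (mertensConst N / u) ^ i / i.factorial) ≤
      dirichletSum (roughAlmostPrimes N i) (1 + u) := by
  have h_log : 0 ≤ log (mertensConst N / u) := log_nonneg ((one_le_div hu.1).2 hu.2.le)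
  have h_prime : ENNReal.ofReal (log (mertensConst N / u)) ≤
      dirichletSum (primesFrom N) (1 + u) := by
    rw [← ofReal_tsum_rpow_neg (summable_primesFrom N (f := fun p => (p : ℝ) ^ (-(1 + u)))
      (Nat.Primes.summable_rpow.2 (by linarith [hu.1])))]
    simpa using ENNReal.ofReal_le_ofReal (log_mertensConst_div_le hN (lt_add_of_pos_right 1 hu.1))
  rw [ENNReal.ofReal_div_of_pos (by positivity), ENNReal.ofReal_pow h_log, ENNReal.ofReal_natCast]
  refine ENNReal.div_le_of_le_mul' (le_trans ?_ (dirichletSum_primesFrom_pow_le N i (1 + u)))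
  gcongr

lemma ofReal_le_lintegral_dirichletSum_rough (hN : 1 < N) (i : ℕ) (H : ℝ) :
    ENNReal.ofReal (mertensConst N * (1 - H * mertensConst N / 2 ^ (i + 1))) ≤
      ∫⁻ u in Set.Ioi (0 : ℝ),
        dirichletSum (roughAlmostPrimes N i) (1 + u) * ENNReal.ofReal (exp (-(H * u))) := by
  have hc := mertensConst_pos N
  set c := mertensConst N
  let F : ℝ → ℝ := fun u => log (c / u) ^ i / i.factorial * (1 - H * u)
  have hF : F = fun u => (u ^ 0 * log (c / u) ^ i) * (i.factorial : ℝ)⁻¹ -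
      (u ^ 1 * log (c / u) ^ i) * (H / i.factorial) := by ext u; simp only [F]; ring
  have h_int0 := (integrableOn_pow_mul_log_pow hc 0 i).mul_const (i.factorial : ℝ)⁻¹
  have h_int1 := (integrableOn_pow_mul_log_pow hc 1 i).mul_const (H / i.factorial)
  have hF_int : IntegrableOn F (Set.Ioo 0 c) := hF ▸ h_int0.sub h_int1
  have hF_eq : ∫ u in Set.Ioo 0 c, F u = c * (1 - H * c / 2 ^ (i + 1)) := by
    rw [hF, integral_sub h_int0 h_int1, integral_mul_const, integral_mul_const,
      integral_pow_mul_log_pow hc, integral_pow_mul_log_pow hc]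
    push_cast
    field_simp
    norm_num
    ring
  have hF_le : ∀ u ∈ Set.Ioo 0 c, ENNReal.ofReal (F u) ≤
      dirichletSum (roughAlmostPrimes N i) (1 + u) * ENNReal.ofReal (exp (-(H * u))) := by
    intro u hu
    have h_log : 0 ≤ log (c / u) := log_nonneg ((one_le_div hu.1).2 hu.2.le)
    rw [ENNReal.ofReal_mul (by positivity)]
    gcongr
    · exact ofReal_log_pow_div_factorial_le hN i hu
    · linarith [add_one_le_exp (-(H * u))]
  calc _ = ENNReal.ofReal (∫ u in Set.Ioo 0 c, F u) := by rw [hF_eq]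
    _ ≤ ∫⁻ u in Set.Ioo 0 c, ENNReal.ofReal (F u) := ofReal_integral_le_lintegral hF_int
    _ ≤ _ := setLIntegral_mono' measurableSet_Ioo hF_le
    _ ≤ _ := lintegral_mono_set Set.Ioo_subset_Ioi_self

end RoughIntegral

section Smooth

variable {N : ℕ}

lemma log_le_cardFactors_mul_log {m : ℕ} (hm : m ∈ N.smoothNumbers) : log m ≤ Ω m * log N := by
  have h0 := Nat.ne_zero_of_mem_smoothNumbers hm
  have h_le : m ≤ N ^ Ω m := by
    conv_lhs => rw [← Nat.prod_primeFactorsList h0]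
    exact List.prod_le_pow_card _ _ fun p hp => (hm.2 p hp).le
  rw [← log_pow]
  exact log_le_log (by positivity) (by exact_mod_cast h_le)

/-- The completely multiplicative weight `n ↦ z^{Ω(n)} / n` of Rankin's method, which takes the
value `z / p` at each prime `p`. Since `Ω 0 = 0` and `1 / 0 = 0`, it vanishes at `0`. -/
noncomputable def powCardFactorsDiv (z : ℝ) : ℕ →* ℝ where
  toFun n := z ^ Ω n / n
  map_one' := by simp
  map_mul' a b := by
    rcases eq_or_ne a 0 with rfl | ha
    · simp
    rcases eq_or_ne b 0 with rfl | hb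
    · simp
    rw [ArithmeticFunction.cardFactors_mul ha hb, pow_add, Nat.cast_mul, mul_div_mul_comm]

lemma powCardFactorsDiv_prime (z : ℝ) {p : ℕ} (hp : p.Prime) : powCardFactorsDiv z p = z / p := by
  change z ^ Ω p / p = z / p
  rw [ArithmeticFunction.cardFactors_apply_prime hp, pow_one]

lemma hasSum_smoothNumbers_pow_cardFactors_div (N : ℕ) {z : ℝ} (hz : |z| < 2) :
    HasSum (fun m : N.smoothNumbers => z ^ Ω (m : ℕ) / ((m : ℕ) : ℝ))
      (∏ p ∈ N.primesBelow, (1 - z / (p : ℝ))⁻¹) := by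
  have h_norm : ∀ {p : ℕ}, p.Prime → ‖powCardFactorsDiv z p‖ < 1 := fun {p} hp => by
    have hp2 : (2 : ℝ) ≤ p := by exact_mod_cast hp.two_le
    rw [powCardFactorsDiv_prime z hp, norm_div, norm_natCast, div_lt_one (by linarith)]
    exact hz.trans_le hp2
  have h_euler := (EulerProduct.summable_and_hasSum_smoothNumbers_prod_primesBelow_geometric
    h_norm N).2
  rwa [prod_congr rfl fun p hp => by
    rw [powCardFactorsDiv_prime z (Nat.mem_primesBelow.1 hp).2]] at h_euler

end Smooth

section LowerBound

variable {N : ℕ}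

lemma ofReal_div_mul_le_lintegral_smooth_mul_rough (hN : 1 < N) {m : ℕ} (hm : m ≠ 0) (i : ℕ)
    (h : ℝ) :
    ENNReal.ofReal (mertensConst N / m * (1 - (log m + h) * mertensConst N / 2 ^ (i + 1))) ≤
      ∫⁻ u in Set.Ioi (0 : ℝ), ENNReal.ofReal ((m : ℝ) ^ (-(1 + u))) *
        dirichletSum (roughAlmostPrimes N i) (1 + u) * ENNReal.ofReal (exp (-(h * u))) := by
  have h_integrand : ∀ u : ℝ, ENNReal.ofReal ((m : ℝ) ^ (-(1 + u))) *
        dirichletSum (roughAlmostPrimes N i) (1 + u) * ENNReal.ofReal (exp (-(h * u))) =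
      ENNReal.ofReal (1 / m) * (dirichletSum (roughAlmostPrimes N i) (1 + u) *
        ENNReal.ofReal (exp (-((log m + h) * u)))) := fun u => by
    rw [mul_right_comm, ofReal_rpow_neg_one_add_mul_exp hm]
    ring
  have h_meas := measurable_dirichletSum (roughAlmostPrimes N i)
  simp only [h_integrand]
  rw [lintegral_const_mul _ (by fun_prop)]
  grw [← ofReal_le_lintegral_dirichletSum_rough hN i (log m + h)]
  rw [← ENNReal.ofReal_mul (by positivity)]
  exact (congrArg ENNReal.ofReal (by ring)).le

lemma tsum_smooth_le_ofReal_transSum (hN : 1 < N) {k : ℕ} (hk : k ≠ 0) {h : ℝ} (h0 : 0 ≤ h) :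
    ∑' m : {m ∈ N.smoothNumbers | Ω m ≤ k}, ENNReal.ofReal (mertensConst N / m *
        (1 - (log m + h) * mertensConst N / 2 ^ (k - Ω (m : ℕ) + 1))) ≤
      ENNReal.ofReal (transSum (almostPrimes k) h) := by
  have h_meas (i : ℕ) := measurable_dirichletSum (roughAlmostPrimes N i)
  calc _ ≤ ∑' m : {m ∈ N.smoothNumbers | Ω m ≤ k}, ∫⁻ u in Set.Ioi (0 : ℝ),
          ENNReal.ofReal ((m : ℝ) ^ (-(1 + u))) *
            dirichletSum (roughAlmostPrimes N (k - Ω (m : ℕ))) (1 + u) *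
            ENNReal.ofReal (exp (-(h * u))) := ENNReal.tsum_le_tsum fun m =>
        ofReal_div_mul_le_lintegral_smooth_mul_rough hN
          (Nat.ne_zero_of_mem_smoothNumbers m.2.1) _ h
    _ = ∫⁻ u in Set.Ioi (0 : ℝ), (∑' m : {m ∈ N.smoothNumbers | Ω m ≤ k},
          ENNReal.ofReal ((m : ℝ) ^ (-(1 + u))) *
            dirichletSum (roughAlmostPrimes N (k - Ω (m : ℕ))) (1 + u)) *
            ENNReal.ofReal (exp (-(h * u))) := by
        simp only [← ENNReal.tsum_mul_right]
        rw [lintegral_tsum fun m => by fun_prop]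
    _ ≤ ∫⁻ u in Set.Ioi (0 : ℝ), dirichletSum (almostPrimes k) (1 + u) *
          ENNReal.ofReal (exp (-(h * u))) := by
        gcongr with u
        exact tsum_smooth_mul_dirichletSum_rough_le N k (1 + u)
    _ = ENNReal.ofReal (transSum (almostPrimes k) h) := (ofReal_transSum_almostPrimes hk h0).symm

lemma rankin_le (hN : 1 ≤ N) {m k : ℕ} (hm : m ∈ N.smoothNumbers) (hk : Ω m ≤ k) {h z : ℝ}
    (h0 : 0 ≤ h) (hz0 : 0 < z) (hz2 : z ≤ 2) :
    (log m + h) * mertensConst N / 2 ^ (k - Ω m + 1) ≤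
      (1 + (k * log N + h) / 2) / z ^ k * z ^ Ω m := by
  have h_log : log m ≤ k * log N :=
    (log_le_cardFactors_mul_log hm).trans (by gcongr)
  have := log_natCast_nonneg m
  calc (log m + h) * mertensConst N / 2 ^ (k - Ω m + 1)
      ≤ (k * log N + h) * 1 / 2 ^ (k - Ω m + 1) := by
        gcongr
        · exact (mertensConst_pos N).le
        · exact mertensConst_le_one hN
    _ = (k * log N + h) / 2 / 2 ^ (k - Ω m) := by rw [pow_succ]; field_simp
    _ ≤ (1 + (k * log N + h) / 2) / z ^ (k - Ω m) := by
        gcongr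
        linarith
    _ = (1 + (k * log N + h) / 2) / z ^ k * z ^ Ω m := by
        rw [← pow_sub_mul_pow z hk]
        field_simp

-- The summand `1` in the Rankin constant makes the terms with `k < Ω m`, which do not divide any
-- `k`-almost prime, nonpositive.
lemma tsum_smooth_one_sub_rankin_le (hN : 1 < N) {k : ℕ} (hk : k ≠ 0) {h z : ℝ} (h0 : 0 ≤ h)
    (hz1 : 1 ≤ z) (hz2 : z ≤ 2) :
    ∑' m : N.smoothNumbers, ENNReal.ofReal (mertensConst N / (m : ℕ) *
        (1 - (1 + (k * log N + h) / 2) / z ^ k * z ^ Ω (m : ℕ))) ≤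
      ENNReal.ofReal (transSum (almostPrimes k) h) := by
  refine le_trans ?_ (tsum_smooth_le_ofReal_transSum hN hk h0)
  rw [tsum_subtype N.smoothNumbers fun m => ENNReal.ofReal (mertensConst N / m *
      (1 - (1 + (k * log N + h) / 2) / z ^ k * z ^ Ω m)),
    tsum_subtype {m ∈ N.smoothNumbers | Ω m ≤ k} fun m => ENNReal.ofReal (mertensConst N / m *
      (1 - (log m + h) * mertensConst N / 2 ^ (k - Ω m + 1)))]
  have h_const := mertensConst_pos N
  refine ENNReal.tsum_le_tsum fun m => Set.indicator_le' (fun m hm => ?_) (fun _ _ => zero_le) m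
  rcases le_or_gt (Ω m) k with hmk | hkm
  · rw [Set.indicator_of_mem (show m ∈ {m ∈ N.smoothNumbers | Ω m ≤ k} from ⟨hm, hmk⟩)]
    grw [rankin_le hN.le hm hmk h0 (zero_lt_one.trans_le hz1) hz2]
  · have h_weight : 1 ≤ (1 + (k * log N + h) / 2) / z ^ k * z ^ Ω m := by
      rw [div_mul_eq_mul_div, one_le_div (by positivity)]
      have := log_natCast_nonneg N
      exact (pow_le_pow_right₀ hz1 hkm.le).trans
        (le_mul_of_one_le_left (by positivity) (le_add_of_nonneg_right (by positivity)))
    rw [ENNReal.ofReal_of_nonpos (mul_nonpos_of_nonneg_of_nonpos (by positivity) (by linarith))]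
    exact zero_le

lemma hasSum_smooth_one_sub_rankin (N : ℕ) {z : ℝ} (hz : |z| < 2) (C : ℝ) :
    HasSum (fun m : N.smoothNumbers => mertensConst N / (m : ℕ) * (1 - C * z ^ Ω (m : ℕ)))
      (exp (-(1 / (2 * ((N : ℝ) - 1)))) *
        (1 - C * ∏ p ∈ N.primesBelow, (1 - 1 / (p : ℝ)) / (1 - z / p))) := by
  have h_sum := ((hasSum_smoothNumbers_pow_cardFactors_div N (z := 1) (by norm_num)).sub
    ((hasSum_smoothNumbers_pow_cardFactors_div N hz).mul_left C)).mul_left (mertensConst N)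
  have h_prod : ∏ p ∈ N.primesBelow, (1 - 1 / (p : ℝ)) ≠ 0 := prod_ne_zero_iff.2 fun p hp =>
    (one_sub_one_div_pos (Nat.mem_primesBelow.1 hp).2.one_lt).ne'
  convert! h_sum using 1
  · ext m
    rw [one_pow]
    ring
  · rw [mertensConst, prod_inv_distrib, prod_inv_distrib, prod_div_distrib]
    field_simp

theorem mul_one_sub_le_transSum_almostPrimes (hN : 1 < N) {k : ℕ} (hk : k ≠ 0) {h z : ℝ}
    (h0 : 0 ≤ h) (hz1 : 1 ≤ z) (hz2 : z < 2) :
    exp (-(1 / (2 * ((N : ℝ) - 1)))) * (1 - (1 + (k * log N + h) / 2) / z ^ k *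
        ∏ p ∈ N.primesBelow, (1 - 1 / (p : ℝ)) / (1 - z / p)) ≤
      transSum (almostPrimes k) h := by
  have h_sum := hasSum_smooth_one_sub_rankin N (abs_lt.2 ⟨by linarith, hz2⟩)
    ((1 + (k * log N + h) / 2) / z ^ k)
  have h_nonneg : 0 ≤ transSum (almostPrimes k) h := tsum_nonneg fun n => by
    have := log_natCast_nonneg (n : ℕ)
    positivity
  rw [← ENNReal.ofReal_le_ofReal_iff h_nonneg, ← h_sum.tsum_eq]
  exact (ofReal_tsum_le_tsum_ofReal h_sum.summable).trans
    (tsum_smooth_one_sub_rankin_le hN hk h0 hz1 hz2.le)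

end LowerBound

section Numerics

lemma prod_primesBelow_thirtySeven_le :
    ∏ p ∈ Nat.primesBelow 37, (1 - 1 / (p : ℝ)) / (1 - 1.8 / p) ≤ 18 := by
  have h_primes : Nat.primesBelow 37 = {2, 3, 5, 7, 11, 13, 17, 19, 23, 29, 31} := by
    decide +kernel
  rw [h_primes]
  norm_num

lemma log_thirtySeven_le : log 37 ≤ 4 := by
  rw [log_le_iff_le_exp (by norm_num), show (4 : ℝ) = (4 : ℕ) * 1 by norm_num, exp_nat_mul]
  exact le_trans (by norm_num) (pow_le_pow_left₀ (by norm_num) exp_one_gt_d9.le 4)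

lemma three_mul_add_one_div_pow_le {k : ℕ} (hk : 21 ≤ k) :
    (3 * k + 1 : ℝ) / 1.8 ^ k ≤ 0.0003 := by
  rw [div_le_iff₀ (by positivity)]
  induction k, hk using Nat.le_induction with
  | base => norm_num
  | succ k hk ih =>
    have hk' : (21 : ℝ) ≤ k := by exact_mod_cast hk
    rw [pow_succ]
    push_cast
    linarith

end Numerics

theorem stmt_19_general (k : ℕ) (hk : 21 ≤ k) (h : ℝ) (h0 : 0 ≤ h) (h1 : h ≤ 2 * k) :
    0.98 < transSum (almostPrimes k) h := by
  have h_bound := mul_one_sub_le_transSum_almostPrimes (N := 37) (k := k) (z := 1.8)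
    (by norm_num) (by lia) h0 (by norm_num) (by norm_num)
  push_cast at h_bound
  have h_log : (k : ℝ) * log 37 ≤ k * 4 :=
    mul_le_mul_of_nonneg_left log_thirtySeven_le k.cast_nonneg
  have : 0 ≤ log 37 := log_nonneg (by norm_num)
  have h_exp : (1 - 1 / 72 : ℝ) ≤ exp (-(1 / (2 * (37 - 1)))) :=
    le_trans (by norm_num) (add_one_le_exp _)
  have h_const : (1 + (k * log 37 + h) / 2) / 1.8 ^ k ≤ 0.0003 := by
    refine le_trans ?_ (three_mul_add_one_div_pow_le hk)
    gcongr ?_ / _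
    linarith
  have h_loss : (1 + (k * log 37 + h) / 2) / 1.8 ^ k *
      ∏ p ∈ Nat.primesBelow 37, (1 - 1 / (p : ℝ)) / (1 - 1.8 / p) ≤ 0.0003 * 18 :=
    (mul_le_mul_of_nonneg_left prod_primesBelow_thirtySeven_le (by positivity)).trans
      (mul_le_mul_of_nonneg_right h_const (by norm_num))
  calc (0.98 : ℝ) < (1 - 1 / 72) * (1 - 0.0003 * 18) := by norm_num
    _ ≤ _ := mul_le_mul h_exp (sub_le_sub_left h_loss 1) (by norm_num) (exp_pos _).le
    _ ≤ transSum (almostPrimes k) h := h_bound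

/-- For every integer `k ≥ 21` and every real `0 ≤ h ≤ 1.05`,
`f(N_k,h) > 0.98`. -/
theorem stmt_19 (k : ℕ) (hk : 21 ≤ k) (h : ℝ) (h0 : 0 ≤ h) (h1 : h ≤ 1.05) :
    0.98 < transSum (almostPrimes k) h := by
  have hk' : (21 : ℝ) ≤ k := by exact_mod_cast hk
  exact stmt_19_general k hk h h0 (by linarith)
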